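/- Let d, d' ≥ 1 with d ≤ d', d ≡ d' (mod 4), and equal squarefree parts sf(d+1) = sf(d'+1). Then for every n ≥ d, a positive rational m occurs as the squared edge length of a regular d-simplex in ℚⁿ if and only if it occurs as the squared edge length of a regular d'-simplex in ℚ^{n+d'−d}; i.e. S_ℚ(d, n) = S_ℚ(d', n + d' − d). -/

import Mathlib

/-- A regular `d`-simplex in `ℚⁿ` of squared edge length `m`. -/
def IsRegularSimplex (d n : ℕ) (m : ℚ) (v : Fin (d + 1) → Fin n → ℚ) : Prop :=
  AffineIndependent ℚ v ∧ ∀ i j, i ≠ j → ∑ k, (v i k - v j k) ^ 2 = m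

open Matrix

section DotProduct

variable {ι κ : Type*} [Fintype κ]

/-- A linear map preserving the standard dot product. -/
def IsDotIsometry (T : (κ → ℚ) →ₗ[ℚ] (κ → ℚ)) : Prop :=
  ∀ u v, T u ⬝ᵥ T v = u ⬝ᵥ v

/-- Two vectors of equal norm are exchanged by a reflection fixing everything orthogonal to their
difference. -/
theorem exists_reflection (u w : κ → ℚ) (h : u ⬝ᵥ u = w ⬝ᵥ w) :
    ∃ R : (κ → ℚ) →ₗ[ℚ] (κ → ℚ), IsDotIsometry R ∧ R u = w ∧
      ∀ z, z ⬝ᵥ u = z ⬝ᵥ w → R z = z := by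
  by_cases huw : u = w
  · exact ⟨LinearMap.id, fun _ _ => rfl, huw, fun _ _ => rfl⟩
  have he : (u - w) ⬝ᵥ (u - w) ≠ 0 := by
    rw [Ne, dotProduct_self_eq_zero]
    exact sub_ne_zero.mpr huw
  let R : (κ → ℚ) →ₗ[ℚ] (κ → ℚ) :=
    { toFun := fun z => z - (2 * (z ⬝ᵥ (u - w)) / ((u - w) ⬝ᵥ (u - w))) • (u - w)
      map_add' := fun y z => by
        ext i
        simp only [add_dotProduct, Pi.add_apply, Pi.sub_apply, Pi.smul_apply, smul_eq_mul]
        ring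
      map_smul' := fun c z => by
        ext i
        simp only [smul_dotProduct, Pi.sub_apply, Pi.smul_apply, smul_eq_mul, RingHom.id_apply]
        ring }
  have hR : ∀ z, R z = z - (2 * (z ⬝ᵥ (u - w)) / ((u - w) ⬝ᵥ (u - w))) • (u - w) :=
    fun _ => rfl
  refine ⟨R, fun y z => ?_, ?_, fun z hz => ?_⟩
  · rw [hR, hR]
    generalize u - w = e at he
    simp only [sub_dotProduct, dotProduct_sub, smul_dotProduct, dotProduct_smul, smul_eq_mul]
    rw [dotProduct_comm e z]
    field_simp
    ring
  · have hu : 2 * (u ⬝ᵥ (u - w)) = (u - w) ⬝ᵥ (u - w) := by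
      simp only [sub_dotProduct, dotProduct_sub]
      rw [dotProduct_comm w u]
      linarith
    rw [hR, hu, div_self he, one_smul, sub_sub_cancel]
  · rw [hR, dotProduct_sub, hz]
    simp

/-- Witt's extension theorem for the standard dot product over `ℚ`: families with equal Gram
matrices are related by an isometry. -/
theorem exists_isDotIsometry_of_gram_eq (x y : ι → κ → ℚ)
    (h : ∀ i j, x i ⬝ᵥ x j = y i ⬝ᵥ y j) (s : Finset ι) :
    ∃ T : (κ → ℚ) →ₗ[ℚ] (κ → ℚ), IsDotIsometry T ∧ ∀ i ∈ s, T (x i) = y i := by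
  classical
  induction s using Finset.induction_on with
  | empty => exact ⟨LinearMap.id, fun _ _ => rfl, by simp⟩
  | insert a s _ ih =>
    obtain ⟨T, hT, hTs⟩ := ih
    obtain ⟨R, hR, hRa, hfix⟩ := exists_reflection (T (x a)) (y a) (by rw [hT, h])
    refine ⟨R ∘ₗ T, fun u v => by simp [hR _ _, hT _ _], fun i hi => ?_⟩
    rcases Finset.mem_insert.mp hi with rfl | hi
    · exact hRa
    · rw [LinearMap.comp_apply, hTs i hi]
      apply hfix
      rw [← h, ← hTs i hi, hT]

end DotProduct

/-- A family of points whose pairwise squared distances are all `m`. -/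
def IsEquidistant {ι κ : Type*} [Fintype κ] (m : ℚ) (v : ι → κ → ℚ) : Prop :=
  ∀ i j, i ≠ j → (v i - v j) ⬝ᵥ (v i - v j) = m

section Equidistant

variable {ι κ : Type*} [Fintype κ] {m : ℚ}

theorem exists_isEquidistant_congr {ι' κ' : Type*} [Fintype κ'] (e : ι ≃ ι') (f : κ ≃ κ')
    (h : ∃ v : ι → κ → ℚ, IsEquidistant m v) : ∃ v : ι' → κ' → ℚ, IsEquidistant m v := by
  obtain ⟨v, hv⟩ := h
  refine ⟨fun i k => v (e.symm i) (f.symm k), fun i j hij => ?_⟩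
  rw [← hv (e.symm i) (e.symm j) (e.symm.injective.ne hij)]
  exact Fintype.sum_equiv f.symm _ _ fun k => rfl

variable [Fintype ι]

/-- On vectors of coordinate sum zero, an equidistant family acts as a similarity. -/
theorem IsEquidistant.dotProduct_linearCombination {v : ι → κ → ℚ} (hv : IsEquidistant m v)
    {x y : ι → ℚ} (hx : ∑ i, x i = 0) (hy : ∑ i, y i = 0) :
    Fintype.linearCombination ℚ v x ⬝ᵥ Fintype.linearCombination ℚ v y = m / 2 * (x ⬝ᵥ y) := by
  classical
  have hg : ∀ i j, v i ⬝ᵥ v j =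
      (v i ⬝ᵥ v i + v j ⬝ᵥ v j - m + if i = j then m else 0) / 2 := by
    intro i j
    split_ifs with hij
    · subst hij; ring
    · have := hv i j hij
      simp only [sub_dotProduct, dotProduct_sub] at this
      rw [dotProduct_comm (v j) (v i)] at this
      linarith
  have hsum : ∀ i, ∑ j, x i * (y j * (v i ⬝ᵥ v j)) =
      x i * (∑ j, y j * (v j ⬝ᵥ v j)) / 2 + m / 2 * (x i * y i) := by
    intro i
    have : ∀ j, x i * (y j * (v i ⬝ᵥ v j)) =
        x i * (v i ⬝ᵥ v i - m) / 2 * y j + x i / 2 * (y j * (v j ⬝ᵥ v j)) +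
          (if i = j then m / 2 * (x i * y j) else 0) := by
      intro j
      rw [hg i j]
      split_ifs <;> ring
    simp only [this, Finset.sum_add_distrib, ← Finset.mul_sum, hy, Finset.sum_ite_eq,
      Finset.mem_univ, if_true]
    ring
  have hexp : Fintype.linearCombination ℚ v x ⬝ᵥ Fintype.linearCombination ℚ v y =
      ∑ i, ∑ j, x i * (y j * (v i ⬝ᵥ v j)) := by
    simp only [Fintype.linearCombination_apply, sum_dotProduct, dotProduct_sum, smul_dotProduct,
      dotProduct_smul, smul_eq_mul, Finset.mul_sum]
    rw [Finset.sum_comm]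
    exact Finset.sum_congr rfl fun i _ => Finset.sum_congr rfl fun j _ => by ring
  rw [hexp]
  simp only [hsum, Finset.sum_add_distrib, ← Finset.mul_sum]
  rw [← Finset.sum_div, ← Finset.sum_mul, hx]
  simp [dotProduct]

theorem IsEquidistant.affineIndependent {v : ι → κ → ℚ} (hm : 0 < m) (hv : IsEquidistant m v) :
    AffineIndependent ℚ v := by
  rw [affineIndependent_iff_of_fintype]
  intro w hw h0
  rw [Finset.univ.weightedVSub_eq_linear_combination hw] at h0
  have h := hv.dotProduct_linearCombination hw hw
  rw [Fintype.linearCombination_apply, h0, zero_dotProduct, eq_comm, mul_eq_zero] at h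
  have hw0 : w = 0 := dotProduct_self_eq_zero.mp (h.resolve_left (by positivity))
  exact fun i => congrFun hw0 i

end Equidistant

/-- A nonnegative rational is a sum of four rational squares. -/
theorem Rat.exists_sum_four_squares {a : ℚ} (ha : 0 ≤ a) :
    ∃ p q r s : ℚ, p ^ 2 + q ^ 2 + r ^ 2 + s ^ 2 = a := by
  obtain ⟨p, q, r, s, h⟩ := Nat.sum_four_squares (a.num.toNat * a.den)
  have hd : (a.den : ℚ) ≠ 0 := by exact_mod_cast a.den_ne_zero
  refine ⟨p / a.den, q / a.den, r / a.den, s / a.den, ?_⟩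
  have hn : ((a.num.toNat : ℕ) : ℚ) = a * a.den := by
    rw [Rat.mul_den_eq_num]
    exact_mod_cast Int.toNat_of_nonneg (Rat.num_nonneg.mpr ha)
  have h' : (p : ℚ) ^ 2 + q ^ 2 + r ^ 2 + s ^ 2 = a.num.toNat * a.den := by exact_mod_cast h
  rw [hn] at h'
  field_simp
  linarith

/-- Every nonnegative rational is the multiplier of a similarity in dimension divisible by four. -/
theorem exists_similarity (β : Type*) [Fintype β] [DecidableEq β] {a : ℚ} (ha : 0 ≤ a) :
    ∃ M : Matrix (Fin 4 × β) (Fin 4 × β) ℚ, ∀ x y, (M *ᵥ x) ⬝ᵥ (M *ᵥ y) = a * (x ⬝ᵥ y) := by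
  obtain ⟨p, q, r, s, h⟩ := Rat.exists_sum_four_squares ha
  let Q : Matrix (Fin 4) (Fin 4) ℚ := !![p, -q, -r, -s; q, p, -s, r; r, s, p, -q; s, -r, q, p]
  have hQ : Qᵀ * Q = a • 1 := by
    ext i j
    fin_cases i <;> fin_cases j <;>
      simp [Q, Matrix.mul_apply, Fin.sum_univ_four] <;> linarith
  refine ⟨blockDiagonal fun _ => Q, fun x y => ?_⟩
  have hM : (blockDiagonal fun _ : β => Q)ᵀ * blockDiagonal (fun _ : β => Q) = a • 1 := by
    rw [blockDiagonal_transpose, ← blockDiagonal_mul, hQ, ← blockDiagonal_one,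
      ← blockDiagonal_smul]
    rfl
  rw [dotProduct_mulVec, ← vecMul_transpose, vecMul_vecMul, hM, vecMul_smul, vecMul_one,
    smul_dotProduct, smul_eq_mul]

section Stabilization

variable {α β κ : Type*} [Fintype α] [Fintype β] [Fintype κ] {m c : ℚ}

/-- The vector equal to `c` on the left summand and zero on the right has the norm of the
all-ones vector. -/
theorem dotProduct_elim_const_self
    (hc : (Fintype.card α + Fintype.card β : ℚ) = c ^ 2 * Fintype.card α) :
    (1 : α ⊕ β → ℚ) ⬝ᵥ 1 = Sum.elim (fun _ => c) 0 ⬝ᵥ Sum.elim (fun _ : α => c) (0 : β → ℚ) := by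
  simp only [dotProduct, Fintype.sum_sum_type, Sum.elim_inl, Sum.elim_inr]
  simp
  linarith

theorem dotProduct_elim (x y : α → ℚ) (z w : β → ℚ) :
    Sum.elim x z ⬝ᵥ Sum.elim y w = x ⬝ᵥ y + z ⬝ᵥ w := by
  simp [dotProduct]

theorem exists_isEquidistant_sum [DecidableEq α] [DecidableEq β] (hc0 : c ≠ 0)
    (hc : (Fintype.card α + Fintype.card β : ℚ) = c ^ 2 * Fintype.card α)
    (M : Matrix β β ℚ) (hM : ∀ x y, (M *ᵥ x) ⬝ᵥ (M *ᵥ y) = m / 2 * (x ⬝ᵥ y))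
    (h : ∃ v : α → κ → ℚ, IsEquidistant m v) :
    ∃ v : α ⊕ β → κ ⊕ β → ℚ, IsEquidistant m v := by
  obtain ⟨v, hv⟩ := h
  obtain ⟨T, hT, hT1, -⟩ := exists_reflection _ _ (dotProduct_elim_const_self hc)
  have key : ∀ x : α ⊕ β → ℚ, x ⬝ᵥ 1 = 0 → ∑ i, (T x ∘ Sum.inl) i = 0 := by
    intro x hx
    rw [← hT, hT1] at hx
    simp only [dotProduct, Fintype.sum_sum_type, Sum.elim_inl, Sum.elim_inr, Pi.zero_apply,
      mul_zero, Finset.sum_const_zero, add_zero, ← Finset.sum_mul] at hx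
    exact (mul_eq_zero.mp hx).resolve_right hc0
  refine ⟨fun i => Sum.elim (Fintype.linearCombination ℚ v (T (Pi.single i 1) ∘ Sum.inl))
    (M *ᵥ (T (Pi.single i 1) ∘ Sum.inr)), fun i j hij => ?_⟩
  set x : α ⊕ β → ℚ := Pi.single i 1 - Pi.single j 1 with hx
  have hx1 : x ⬝ᵥ 1 = 0 := by simp [hx]
  have hxx : x ⬝ᵥ x = 2 := by
    simp [hx, hij, hij.symm]
    norm_num
  have hdiff : Sum.elim (Fintype.linearCombination ℚ v (T (Pi.single i 1) ∘ Sum.inl))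
      (M *ᵥ (T (Pi.single i 1) ∘ Sum.inr)) -
      Sum.elim (Fintype.linearCombination ℚ v (T (Pi.single j 1) ∘ Sum.inl))
      (M *ᵥ (T (Pi.single j 1) ∘ Sum.inr)) =
      Sum.elim (Fintype.linearCombination ℚ v (T x ∘ Sum.inl)) (M *ᵥ (T x ∘ Sum.inr)) := by
    have e1 : T x ∘ Sum.inl = T (Pi.single i 1) ∘ Sum.inl - T (Pi.single j 1) ∘ Sum.inl := by
      rw [hx, map_sub]; rfl
    have e2 : T x ∘ Sum.inr = T (Pi.single i 1) ∘ Sum.inr - T (Pi.single j 1) ∘ Sum.inr := by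
      rw [hx, map_sub]; rfl
    rw [e1, e2, map_sub, mulVec_sub]
    ext (k | k) <;> rfl
  rw [hdiff, dotProduct_elim, hM, hv.dotProduct_linearCombination (key x hx1) (key x hx1),
    ← mul_add, ← dotProduct_elim, Sum.elim_comp_inl_inr, hT, hxx]
  ring

theorem exists_isEquidistant_of_sum [DecidableEq α] [DecidableEq β] (hm : m ≠ 0)
    (hc : (Fintype.card α + Fintype.card β : ℚ) = c ^ 2 * Fintype.card α)
    (M : Matrix β β ℚ) (hM : ∀ x y, (M *ᵥ x) ⬝ᵥ (M *ᵥ y) = (m / 2)⁻¹ * (x ⬝ᵥ y))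
    (h : ∃ v : α ⊕ β → κ ⊕ β → ℚ, IsEquidistant m v) :
    ∃ v : α → κ → ℚ, IsEquidistant m v := by
  obtain ⟨v, hv⟩ := h
  obtain ⟨T, hT, hT1, -⟩ := exists_reflection _ _ (dotProduct_elim_const_self hc).symm
  -- `P` is a similarity on the vectors whose left part has coordinate sum zero.
  let P : (α ⊕ β → ℚ) →ₗ[ℚ] (κ ⊕ β → ℚ) := Fintype.linearCombination ℚ v ∘ₗ T
  have hP : ∀ (x x' : α → ℚ) (z z' : β → ℚ), ∑ i, x i = 0 → ∑ i, x' i = 0 →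
      P (Sum.elim x z) ⬝ᵥ P (Sum.elim x' z') = m / 2 * (x ⬝ᵥ x' + z ⬝ᵥ z') := by
    have key : ∀ (x : α → ℚ) (z : β → ℚ), ∑ i, x i = 0 → ∑ i, T (Sum.elim x z) i = 0 := by
      intro x z hx
      rw [← dotProduct_one, ← hT1, hT, dotProduct_elim]
      simp [dotProduct, ← Finset.sum_mul, hx]
    intro x x' z z' hx hx'
    rw [← dotProduct_elim, ← hT]
    exact hv.dotProduct_linearCombination (key x z hx) (key x' z' hx')
  obtain ⟨U, hU, hUe⟩ := exists_isDotIsometry_of_gram_eq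
    (fun b : β => P (Sum.elim 0 (M *ᵥ Pi.single b 1)))
    (fun b : β => (Sum.elim 0 (Pi.single b 1) : κ ⊕ β → ℚ)) (fun b b' => by
      rw [hP _ _ _ _ (by simp) (by simp), hM, dotProduct_elim, zero_dotProduct, zero_dotProduct]
      field_simp
      ring) Finset.univ
  refine ⟨fun i => U (P (Sum.elim (Pi.single i 1) 0)) ∘ Sum.inl, fun i j hij => ?_⟩
  set x : α → ℚ := Pi.single i 1 - Pi.single j 1 with hx
  have hx0 : ∑ k, x k = 0 := by simp [hx]
  have hxx : x ⬝ᵥ x = 2 := by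
    simp [hx, hij, hij.symm]
    norm_num
  have hdiff : U (P (Sum.elim (Pi.single i 1) 0)) ∘ Sum.inl -
      U (P (Sum.elim (Pi.single j 1) 0)) ∘ Sum.inl = U (P (Sum.elim x 0)) ∘ Sum.inl := by
    have : (Sum.elim x 0 : α ⊕ β → ℚ) =
        Sum.elim (Pi.single i 1) 0 - Sum.elim (Pi.single j 1) 0 := by
      ext (k | k)
      · rfl
      · simp
    rw [this, map_sub, map_sub]
    rfl
  have hright : U (P (Sum.elim x 0)) ∘ Sum.inr = 0 := by
    ext b
    have : U (P (Sum.elim x 0)) ⬝ᵥ Sum.elim 0 (Pi.single b 1) = 0 := by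
      rw [← hUe b (Finset.mem_univ b), hU, hP _ _ _ _ hx0 (by simp)]
      simp
    rw [← Sum.elim_comp_inl_inr (U (P (Sum.elim x 0))), dotProduct_elim] at this
    simpa using this
  have hnorm := hP x x 0 0 hx0 hx0
  rw [← hU, ← Sum.elim_comp_inl_inr (U (P (Sum.elim x 0))), dotProduct_elim, hright, hxx] at hnorm
  rw [hdiff]
  simpa using hnorm

end Stabilization

theorem IsRegularSimplex.pos {d n : ℕ} {m : ℚ} {v : Fin (d + 1) → Fin n → ℚ} (hd : 1 ≤ d)
    (h : IsRegularSimplex d n m v) : 0 < m := by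
  have h01 : (0 : Fin (d + 1)) ≠ Fin.last d := by
    rw [Ne, Fin.ext_iff]
    simp
    lia
  have hne : v 0 - v (Fin.last d) ≠ 0 := sub_ne_zero.mpr (h.1.injective.ne h01)
  have hm : (v 0 - v (Fin.last d)) ⬝ᵥ (v 0 - v (Fin.last d)) = m := by
    rw [← h.2 _ _ h01]
    simp [dotProduct, sq]
  rw [← hm]
  refine lt_of_le_of_ne ?_ (Ne.symm (dotProduct_self_eq_zero.not.mpr hne))
  exact Finset.sum_nonneg fun i _ => mul_self_nonneg _

theorem exists_isRegularSimplex_iff {d n : ℕ} {m : ℚ} (hd : 1 ≤ d) :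
    (∃ v, IsRegularSimplex d n m v) ↔
      0 < m ∧ ∃ v : Fin (d + 1) → Fin n → ℚ, IsEquidistant m v := by
  have key : ∀ v : Fin (d + 1) → Fin n → ℚ, IsEquidistant m v ↔
      ∀ i j, i ≠ j → ∑ k, (v i k - v j k) ^ 2 = m := by
    intro v
    simp [IsEquidistant, dotProduct, sq]
  constructor
  · rintro ⟨v, hv⟩
    exact ⟨hv.pos hd, v, (key v).mpr hv.2⟩
  · rintro ⟨hm, v, hv⟩
    exact ⟨v, hv.affineIndependent hm, (key v).mp hv⟩

/-- Stabilization: if `d ≤ d'`, `d ≡ d' (mod 4)` and `sf (d+1) = sf (d'+1)`, then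
`S_ℚ(d, n) = S_ℚ(d', n + d' - d)` for every `n ≥ d`. -/
theorem S_stabilization (d d' : ℕ) (hd : 1 ≤ d) (hdd' : d ≤ d') (hmod : d % 4 = d' % 4)
    (hsf : ∀ s : ℕ, Squarefree s →
      ((∃ u : ℕ, d + 1 = s * u ^ 2) ↔ (∃ u : ℕ, d' + 1 = s * u ^ 2)))
    (n : ℕ) (hn : d ≤ n) (m : ℚ) :
    (∃ v : Fin (d + 1) → Fin n → ℚ, IsRegularSimplex d n m v) ↔
      ∃ v : Fin (d' + 1) → Fin (n + (d' - d)) → ℚ, IsRegularSimplex d' (n + (d' - d)) m v := by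
  obtain ⟨k, rfl⟩ : ∃ k, d' = d + 4 * k := ⟨(d' - d) / 4, by lia⟩
  rw [exists_isRegularSimplex_iff hd, exists_isRegularSimplex_iff (by lia)]
  refine and_congr_right fun hm => ?_
  obtain ⟨s, u, hsu, hs⟩ := Nat.sq_mul_squarefree (d + 1)
  obtain ⟨u', hu'⟩ := (hsf s hs).mp ⟨u, by rw [← hsu, mul_comm]⟩
  have hu0 : (u : ℚ) ≠ 0 := by
    rintro h
    simp_all
  have hu0' : (u' : ℚ) ≠ 0 := by
    rintro h
    simp_all
  have hc : (Fintype.card (Fin (d + 1)) + Fintype.card (Fin 4 × Fin k) : ℚ) =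
      (u' / u : ℚ) ^ 2 * Fintype.card (Fin (d + 1)) := by
    have h1 : (d + 1 : ℚ) = u ^ 2 * s := by exact_mod_cast hsu.symm
    have h2 : (d + 4 * k + 1 : ℚ) = s * u' ^ 2 := by exact_mod_cast hu'
    simp only [Fintype.card_fin, Fintype.card_prod]
    push_cast
    rw [show (d + 1 + 4 * k : ℚ) = d + 4 * k + 1 by ring, h2, h1]
    field_simp
  have e : Fin (d + 1) ⊕ (Fin 4 × Fin k) ≃ Fin (d + 4 * k + 1) :=
    Fintype.equivFinOfCardEq (by simp; ring)
  have f : Fin n ⊕ (Fin 4 × Fin k) ≃ Fin (n + (d + 4 * k - d)) :=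
    Fintype.equivFinOfCardEq (by simp)
  constructor
  · intro h
    obtain ⟨M, hM⟩ := exists_similarity (Fin k) (half_pos hm).le
    exact exists_isEquidistant_congr e f
      (exists_isEquidistant_sum (div_ne_zero hu0' hu0) hc M hM h)
  · intro h
    obtain ⟨M, hM⟩ := exists_similarity (Fin k) (inv_pos.mpr (half_pos hm)).le
    exact exists_isEquidistant_of_sum hm.ne' hc M hM
      (exists_isEquidistant_congr e.symm f.symm h)
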